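/- Let m ≥ 1 and let g : ℝ^m → ℝ be a C^∞ function. Then the restriction of g to [0,1]^m has finite Hardy–Krause variation anchored at 0, and V_HK0(g) = Σ_{∅≠T⊆{1,…,m}} ∫_{[0,1]^T} |g^(1_T)(t̃)| dt, where for t ∈ [0,1]^T the point t̃ ∈ ℝ^m agrees with t on the coordinates in T and is 0 on the coordinates outside T, and the integral is with respect to Lebesgue measure on ℝ^T. -/

import Mathlib

open Finset MeasureTheory
open scoped ENNReal

/-- The quasi-volume `Δ(g; [u,v])` of `g` on the axis-aligned rectangle `[u,v]`. -/
noncomputable def qvol {ι : Type*} [Fintype ι] [DecidableEq ι]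
    (g : (ι → ℝ) → ℝ) (u v : ι → ℝ) : ℝ :=
  ∑ δ : ι → Bool,
    (-1 : ℝ) ^ (Finset.univ.filter fun k => δ k = true).card *
      g fun k => if δ k then u k else v k

/-- The Vitali variation of `g : [0,1]^ι → ℝ`: the supremum over all axis-aligned grid
splits of `[0,1]^ι` of the sum of the absolute quasi-volumes of the cells. -/
noncomputable def vitali {ι : Type*} [Fintype ι] [DecidableEq ι]
    (g : (ι → ℝ) → ℝ) : ℝ≥0∞ :=
  ⨆ (N : ι → ℕ) (u : ∀ k, Fin (N k + 1) → ℝ) (_ : ∀ k, StrictMono (u k))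
      (_ : ∀ k, u k 0 = 0) (_ : ∀ k, u k (Fin.last (N k)) = 1),
    ∑ l : ∀ k, Fin (N k),
      ENNReal.ofReal
        |qvol g (fun k => u k ((l k).castSucc)) fun k => u k ((l k).succ)|

/-- The Hardy–Krause variation of `g` anchored at `0`: the sum over nonempty `T ⊆ ι`
of the Vitali variations of the faces of `g` (coordinates outside `T` set to `0`). -/
noncomputable def hk0 {ι : Type*} [Fintype ι] [DecidableEq ι]
    (g : (ι → ℝ) → ℝ) : ℝ≥0∞ :=
  ∑ T : Finset ι,
    if T.Nonempty then
      vitali fun t : {j // j ∈ T} → ℝ =>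
        g fun k => if h : k ∈ T then t ⟨k, h⟩ else 0
    else 0

/-- Partial derivative in the `k`-th coordinate direction. -/
noncomputable def pderiv1 {m : ℕ} (k : Fin m) (g : (Fin m → ℝ) → ℝ) :
    (Fin m → ℝ) → ℝ :=
  fun x => fderiv ℝ g x (Pi.single k 1)

/-- The mixed partial derivative `g^(β)` for a multi-index `β ∈ ℕ^m`. -/
noncomputable def pderivMulti {m : ℕ} (β : Fin m → ℕ)
    (g : (Fin m → ℝ) → ℝ) : (Fin m → ℝ) → ℝ :=
  (List.finRange m).foldr (fun k h => (pderiv1 k)^[β k] h) g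

/-! Iterating the fundamental theorem of calculus one coordinate at a time shows that the
quasi-volume of a rectangle is the integral over it of the full mixed derivative `h`. Summing over
the cells of a grid gives `V(g) ≤ ∫ |h|`. Conversely `h` is uniformly continuous on the unit cube,
so on each cell `C` of a fine grid it is nearly constant and `|∫_C h|` differs from `∫_C |h|` by a
small multiple of the volume of `C`; summing gives `∫ |h| ≤ V(g) + ε`. The Hardy–Krause variation is
obtained by applying this to every face, whose mixed derivative is the partial derivative of `g`
along the directions of the face. -/

section QuasiVolume

variable {ι κ : Type*} [Fintype ι] [DecidableEq ι] [Fintype κ] [DecidableEq κ]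

lemma qvol_eq_sum_prod (f : (ι → ℝ) → ℝ) (u v : ι → ℝ) :
    qvol f u v =
      ∑ δ : ι → Bool, (∏ k, if δ k then (-1 : ℝ) else 1) * f fun k => if δ k then u k else v k := by
  simp only [qvol, Finset.prod_ite, Finset.prod_const, one_pow, mul_one]

lemma qvol_reindex (e : κ ≃ ι) (f : (ι → ℝ) → ℝ) (u v : ι → ℝ) :
    qvol f u v = qvol (fun t : κ → ℝ => f (t ∘ e.symm)) (u ∘ e) (v ∘ e) := by
  rw [qvol_eq_sum_prod, qvol_eq_sum_prod, ← (e.arrowCongr (Equiv.refl Bool)).sum_comp]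
  refine Fintype.sum_congr _ _ fun δ => ?_
  congr 1
  · rw [← e.prod_comp]
    simp
  · congr 1
    ext i
    simp

lemma qvol_fin_succ {n : ℕ} (f : (Fin (n + 1) → ℝ) → ℝ) (u v : Fin (n + 1) → ℝ) :
    qvol f u v = qvol (fun y => f (Fin.cons (v 0) y)) (Fin.tail u) (Fin.tail v) -
      qvol (fun y => f (Fin.cons (u 0) y)) (Fin.tail u) (Fin.tail v) := by
  have corner (b : Bool) (δ : Fin n → Bool) :
      (fun k => if (Fin.cons b δ : Fin (n + 1) → Bool) k then u k else v k) =
        Fin.cons (if b then u 0 else v 0) fun k => if δ k then Fin.tail u k else Fin.tail v k := by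
    ext k
    cases k using Fin.cases <;> simp [Fin.tail]
  simp only [qvol_eq_sum_prod]
  rw [← (Fin.consEquiv fun _ : Fin (n + 1) => Bool).sum_comp, Fintype.sum_prod_type]
  simp [Fin.prod_univ_succ, corner, Finset.sum_neg_distrib, neg_add_eq_sub]

end QuasiVolume

section BoxIntegral

variable {F : Type*} [NormedAddCommGroup F] [NormedSpace ℝ F]

lemma setIntegral_Icc_reindex {ι κ : Type*} [Fintype ι] [Fintype κ] (e : κ ≃ ι)
    (φ : (ι → ℝ) → F) (u v : ι → ℝ) :
    ∫ t in Set.Icc u v, φ t = ∫ t in Set.Icc (u ∘ e) (v ∘ e), φ (t ∘ e.symm) := by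
  have reindex (t : κ → ℝ) : MeasurableEquiv.piCongrLeft (fun _ : ι => ℝ) e t = t ∘ e.symm := by
    ext i
    obtain ⟨k, rfl⟩ := e.surjective i
    simp [MeasurableEquiv.coe_piCongrLeft, Equiv.piCongrLeft_apply_apply]
  rw [← (volume_measurePreserving_piCongrLeft (fun _ : ι => ℝ) e).setIntegral_preimage_emb
    (MeasurableEquiv.measurableEmbedding _)]
  have preimage_Icc : MeasurableEquiv.piCongrLeft (fun _ : ι => ℝ) e ⁻¹' Set.Icc u v =
      Set.Icc (u ∘ e) (v ∘ e) := by
    ext t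
    simp [reindex, Pi.le_def, ← e.forall_congr_right (q := fun i => u i ≤ t (e.symm i)),
      ← e.forall_congr_right (q := fun i => t (e.symm i) ≤ v i)]
  simp only [preimage_Icc, reindex]

lemma setIntegral_Icc_fin_succ {n : ℕ} {φ : (Fin (n + 1) → ℝ) → F} {u v : Fin (n + 1) → ℝ}
    (hφ : IntegrableOn φ (Set.Icc u v)) :
    ∫ t in Set.Icc u v, φ t =
      ∫ y in Set.Icc (Fin.tail u) (Fin.tail v), ∫ s in Set.Icc (u 0) (v 0), φ (Fin.cons s y) := by
  let e := (MeasurableEquiv.piFinSuccAbove (fun _ : Fin (n + 1) => ℝ) 0).symm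
  have he : MeasurePreserving e :=
    (volume_preserving_piFinSuccAbove (fun _ : Fin (n + 1) => ℝ) 0).symm
  have e_apply (z : ℝ × (Fin n → ℝ)) : e z = Fin.cons z.1 z.2 := Fin.insertNth_zero' z.1 z.2
  have preimage_Icc :
      e ⁻¹' Set.Icc u v = Set.Icc (u 0) (v 0) ×ˢ Set.Icc (Fin.tail u) (Fin.tail v) := by
    ext z
    simp [-Set.Icc_prod_Icc, e_apply, Pi.le_def, Fin.forall_fin_succ, Fin.tail, and_and_and_comm]
  have hφe : IntegrableOn (φ ∘ e) (e ⁻¹' Set.Icc u v) :=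
    (he.integrableOn_comp_preimage e.measurableEmbedding).2 hφ
  rw [← he.setIntegral_preimage_emb e.measurableEmbedding, preimage_Icc, Measure.volume_eq_prod,
    ← setIntegral_prod_swap, setIntegral_prod]
  · simp only [Prod.swap_prod_mk, e_apply]
  · rw [preimage_Icc] at hφe
    exact hφe.swap

end BoxIntegral

section MixedDerivative

variable {E F : Type*} [NormedAddCommGroup E] [NormedSpace ℝ E]
  [NormedAddCommGroup F] [NormedSpace ℝ F]

lemma fderiv_iteratedFDeriv_apply {n : ℕ} {g : E → F} (hg : ContDiff ℝ (n + 1 : ℕ) g)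
    (w : Fin (n + 1) → E) (x : E) :
    fderiv ℝ (fun y => iteratedFDeriv ℝ n g y (Fin.tail w)) x (w 0) =
      iteratedFDeriv ℝ (n + 1) g x w := by
  have hdiff : DifferentiableAt ℝ (iteratedFDeriv ℝ n g) x :=
    hg.differentiable_iteratedFDeriv (mod_cast n.lt_succ_self) x
  rw [iteratedFDeriv_succ_apply_left, fderiv_continuousMultilinear_apply_const_apply hdiff]

lemma foldr_fderiv_eq_iteratedFDeriv {n : ℕ} {g : E → F} (hg : ContDiff ℝ n g) (w : Fin n → E) :
    (List.ofFn w).foldr (fun v h x => fderiv ℝ h x v) g = fun x => iteratedFDeriv ℝ n g x w := by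
  induction n with
  | zero => simp
  | succ n ih =>
    rw [List.ofFn_succ, List.foldr_cons, ih (hg.of_le (mod_cast n.le_succ))]
    exact funext (fderiv_iteratedFDeriv_apply hg w)

lemma hasDerivAt_iteratedFDeriv_add_smul {n : ℕ} {g : E → F} (hg : ContDiff ℝ (n + 1 : ℕ) g)
    (w : Fin (n + 1) → E) (x : E) (s : ℝ) :
    HasDerivAt (fun s : ℝ => iteratedFDeriv ℝ n g (x + s • w 0) (Fin.tail w))
      (iteratedFDeriv ℝ (n + 1) g (x + s • w 0) w) s := by
  have hline : HasDerivAt (fun s : ℝ => x + s • w 0) (w 0) s := by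
    simpa using ((hasDerivAt_id s).smul_const (w 0)).const_add x
  have hdiff : Differentiable ℝ fun y => iteratedFDeriv ℝ n g y (Fin.tail w) := fun y =>
    (hg.differentiable_iteratedFDeriv (mod_cast n.lt_succ_self)
      y).continuousMultilinear_apply_const _
  rw [← fderiv_iteratedFDeriv_apply hg]
  exact (hdiff _).hasFDerivAt.comp_hasDerivAt s hline

lemma integral_iteratedFDeriv_add_smul [CompleteSpace F] {n : ℕ} {g : E → F}
    (hg : ContDiff ℝ (n + 1 : ℕ) g) (w : Fin (n + 1) → E) (x : E) {a b : ℝ} (hab : a ≤ b) :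
    ∫ s in Set.Icc a b, iteratedFDeriv ℝ (n + 1) g (x + s • w 0) w =
      iteratedFDeriv ℝ n g (x + b • w 0) (Fin.tail w) -
        iteratedFDeriv ℝ n g (x + a • w 0) (Fin.tail w) := by
  rw [integral_Icc_eq_integral_Ioc, ← intervalIntegral.integral_of_le hab]
  exact intervalIntegral.integral_eq_sub_of_hasDerivAt
    (fun s _ => hasDerivAt_iteratedFDeriv_add_smul hg w x s)
    (Continuous.intervalIntegrable (by fun_prop) a b)

theorem qvol_comp_fin_sum_smul {n : ℕ} {g : E → ℝ} (hg : ContDiff ℝ n g) (w : Fin n → E) (x : E)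
    {u v : Fin n → ℝ} (huv : u ≤ v) :
    qvol (fun t => g (x + ∑ i, t i • w i)) u v =
      ∫ t in Set.Icc u v, iteratedFDeriv ℝ n g (x + ∑ i, t i • w i) w := by
  induction n generalizing x with
  | zero => simp [qvol, Measure.real, Real.volume_Icc_pi]
  | succ n ih =>
    have hg' : ContDiff ℝ n g := hg.of_le (mod_cast n.le_succ)
    have hsum (s : ℝ) (y : Fin n → ℝ) :
        x + ∑ i, (Fin.cons s y : Fin (n + 1) → ℝ) i • w i =
          x + s • w 0 + ∑ i, y i • Fin.tail w i := by
      simp [Fin.sum_univ_succ, Fin.tail, add_assoc]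
    have htail : Fin.tail u ≤ Fin.tail v := fun i => huv i.succ
    have hint (c : E) : IntegrableOn
        (fun y : Fin n → ℝ => iteratedFDeriv ℝ n g (c + ∑ i, y i • Fin.tail w i) (Fin.tail w))
        (Set.Icc (Fin.tail u) (Fin.tail v)) :=
      Continuous.integrableOn_Icc (by fun_prop)
    have hinner (y : Fin n → ℝ) :=
      integral_iteratedFDeriv_add_smul hg w (x + ∑ i, y i • Fin.tail w i) (huv 0)
    simp only [add_right_comm x (Finset.sum _ _)] at hinner
    calc
      _ = ∫ y in Set.Icc (Fin.tail u) (Fin.tail v),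
            (iteratedFDeriv ℝ n g (x + v 0 • w 0 + ∑ i, y i • Fin.tail w i) (Fin.tail w) -
              iteratedFDeriv ℝ n g (x + u 0 • w 0 + ∑ i, y i • Fin.tail w i) (Fin.tail w)) := by
        simp only [qvol_fin_succ, hsum]
        rw [ih hg' _ _ htail, ih hg' _ _ htail, integral_sub (hint _) (hint _)]
      _ = ∫ y in Set.Icc (Fin.tail u) (Fin.tail v), ∫ s in Set.Icc (u 0) (v 0),
            iteratedFDeriv ℝ (n + 1) g (x + s • w 0 + ∑ i, y i • Fin.tail w i) w := by
        simp only [hinner]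
      _ = _ := by
        rw [setIntegral_Icc_fin_succ (Continuous.integrableOn_Icc (by fun_prop))]
        simp only [hsum]

theorem qvol_comp_sum_smul {ι : Type*} [Fintype ι] [DecidableEq ι] {n : ℕ} (e : Fin n ≃ ι)
    {g : E → ℝ} (hg : ContDiff ℝ n g) (w : ι → E) (x : E) {u v : ι → ℝ} (huv : u ≤ v) :
    qvol (fun t => g (x + ∑ i, t i • w i)) u v =
      ∫ t in Set.Icc u v, iteratedFDeriv ℝ n g (x + ∑ i, t i • w i) (w ∘ e) := by
  have hsum (t : Fin n → ℝ) :
      x + ∑ i, (t ∘ e.symm) i • w i = x + ∑ j, t j • (w ∘ e) j := by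
    simp [← e.sum_comp]
  rw [qvol_reindex e, setIntegral_Icc_reindex e]
  simp only [hsum]
  exact qvol_comp_fin_sum_smul hg (w ∘ e) x fun j => huv (e j)

end MixedDerivative

section Grid

variable {ι : Type*} {N : ι → ℕ}

/-- The lower corner of the cell of index `l` in the product grid whose breakpoints in direction
`k` are `u k 0, …, u k (N k)`. -/
def cellLower (u : ∀ k, Fin (N k + 1) → ℝ) (l : ∀ k, Fin (N k)) : ι → ℝ :=
  fun k => u k (l k).castSucc

/-- The upper corner of the cell of index `l`, see `cellLower`. -/
def cellUpper (u : ∀ k, Fin (N k + 1) → ℝ) (l : ∀ k, Fin (N k)) : ι → ℝ :=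
  fun k => u k (l k).succ

variable {u : ∀ k, Fin (N k + 1) → ℝ}

lemma cellLower_le_cellUpper (hu : ∀ k, Monotone (u k)) (l : ∀ k, Fin (N k)) :
    cellLower u l ≤ cellUpper u l :=
  fun k => hu k Fin.castSucc_lt_succ.le

lemma le_cellLower (hu : ∀ k, Monotone (u k)) (l : ∀ k, Fin (N k)) :
    (fun k => u k 0) ≤ cellLower u l :=
  fun k => hu k (Fin.zero_le _)

lemma cellUpper_le (hu : ∀ k, Monotone (u k)) (l : ∀ k, Fin (N k)) :
    cellUpper u l ≤ fun k => u k (Fin.last (N k)) :=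
  fun k => hu k (Fin.le_last _)

end Grid

lemma iUnion_Ioc_fin {α : Type*} [LinearOrder α] {n : ℕ} {u : Fin (n + 1) → α} (hu : Monotone u) :
    ⋃ j : Fin n, Set.Ioc (u j.castSucc) (u j.succ) = Set.Ioc (u 0) (u (Fin.last n)) := by
  induction n with
  | zero => simp
  | succ n ih =>
    have hu' : Monotone (u ∘ Fin.castSucc) := hu.comp Fin.strictMono_castSucc.monotone
    have ih' := ih hu'
    simp only [Function.comp_apply, Fin.castSucc_zero] at ih'
    rw [← Set.Ioc_union_Ioc_eq_Ioc (hu (Fin.zero_le (Fin.last n).castSucc))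
      (hu (Fin.le_last _)), ← ih']
    ext x
    simp [Fin.exists_fin_succ']

lemma pairwise_disjoint_Ioc_fin {α : Type*} [LinearOrder α] {n : ℕ} {u : Fin (n + 1) → α}
    (hu : Monotone u) :
    Pairwise (Function.onFun Disjoint fun j : Fin n => Set.Ioc (u j.castSucc) (u j.succ)) := by
  intro i j hij
  simpa [Function.onFun] using
    hu.pairwise_disjoint_on_Ioc_succ (Fin.castSucc_injective n |>.ne hij)

lemma sum_setLIntegral_cells {ι : Type*} [Fintype ι] [DecidableEq ι] {N : ι → ℕ}
    {u : ∀ k, Fin (N k + 1) → ℝ} (hu : ∀ k, Monotone (u k)) (φ : (ι → ℝ) → ℝ≥0∞) :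
    ∑ l : ∀ k, Fin (N k), ∫⁻ t in Set.Icc (cellLower u l) (cellUpper u l), φ t =
      ∫⁻ t in Set.Icc (fun k => u k 0) fun k => u k (Fin.last (N k)), φ t := by
  let cell (l : ∀ k, Fin (N k)) : Set (ι → ℝ) :=
    Set.univ.pi fun k => Set.Ioc (u k (l k).castSucc) (u k (l k).succ)
  have hae (a b : ι → ℝ) : (Set.univ.pi fun k => Set.Ioc (a k) (b k)) =ᵐ[volume] Set.Icc a b :=
    Measure.univ_pi_Ioc_ae_eq_Icc (μ := fun _ : ι => (volume : Measure ℝ))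
  have hdisj : Pairwise (Function.onFun Disjoint cell) := by
    intro l l' hll'
    obtain ⟨k, hk⟩ := Function.ne_iff.1 hll'
    exact Set.disjoint_univ_pi.2 ⟨k, pairwise_disjoint_Ioc_fin (hu k) hk⟩
  have hunion : ⋃ l, cell l =
      Set.univ.pi fun k => Set.Ioc (u k 0) (u k (Fin.last (N k))) := by
    simp only [cell, ← iUnion_Ioc_fin (hu _)]
    exact Set.iUnion_univ_pi fun k (j : Fin (N k)) => Set.Ioc (u k j.castSucc) (u k j.succ)
  calc
    _ = ∑ l, ∫⁻ t in cell l, φ t :=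
      Fintype.sum_congr _ _ fun l => setLIntegral_congr (hae _ _).symm
    _ = ∫⁻ t in ⋃ l, cell l, φ t := by
      rw [lintegral_iUnion (fun l => .univ_pi fun _ => measurableSet_Ioc) hdisj, tsum_fintype]
    _ = _ := by rw [hunion, setLIntegral_congr (hae _ _)]

lemma exists_strictMono_fin_dist_le {δ : ℝ} (hδ : 0 < δ) :
    ∃ (n : ℕ) (u : Fin (n + 1) → ℝ), StrictMono u ∧ u 0 = 0 ∧ u (Fin.last n) = 1 ∧
      ∀ j : Fin n, dist (u j.castSucc) (u j.succ) ≤ δ := by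
  obtain ⟨n, hn⟩ := exists_nat_one_div_lt hδ
  have hpos : (0 : ℝ) < n + 1 := n.cast_add_one_pos
  refine ⟨n + 1, fun j => j / (n + 1), fun i j hij => ?_, by simp, ?_, fun j => ?_⟩
  · exact div_lt_div_of_pos_right (mod_cast hij) hpos
  · simp [hpos.ne']
  · rw [dist_comm, Real.dist_eq, ← sub_div]
    simpa [abs_of_pos hpos] using hn.le

-- Both `∫⁻ ‖h‖ₑ` and `‖∫ h‖ₑ` are within `ε * μ s` of `‖c‖ₑ * μ s`, hence the factor `2`.
lemma setLIntegral_enorm_le_of_enorm_sub_le {α F : Type*} [MeasurableSpace α]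
    [NormedAddCommGroup F] [NormedSpace ℝ F] [CompleteSpace F] {μ : Measure α} {s : Set α}
    (hs : MeasurableSet s) (hμs : μ s ≠ ∞) {h : α → F} (hh : IntegrableOn h s μ) {c : F} {ε : ℝ≥0∞}
    (hc : ∀ t ∈ s, ‖h t - c‖ₑ ≤ ε) :
    ∫⁻ t in s, ‖h t‖ₑ ∂μ ≤ ‖∫ t in s, h t ∂μ‖ₑ + ∫⁻ _ in s, 2 * ε ∂μ := by
  have hconst : IntegrableOn (fun _ => c) s μ := integrableOn_const hμs
  have hosc : ∫⁻ t in s, ‖c - h t‖ₑ ∂μ ≤ ε * μ s := by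
    rw [← setLIntegral_const]
    exact setLIntegral_mono' hs fun t ht => enorm_sub_rev c (h t) ▸ hc t ht
  have hmean : ‖c‖ₑ * μ s ≤ ‖∫ t in s, h t ∂μ‖ₑ + ε * μ s := by
    calc
      ‖c‖ₑ * μ s = ‖∫ _ in s, c ∂μ‖ₑ := by
        rw [setIntegral_const, enorm_smul, Real.enorm_of_nonneg measureReal_nonneg,
          ofReal_measureReal hμs, mul_comm]
      _ = ‖(∫ t in s, h t ∂μ) + ∫ t in s, (c - h t) ∂μ‖ₑ := by
        rw [integral_sub hconst hh, add_sub_cancel]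
      _ ≤ ‖∫ t in s, h t ∂μ‖ₑ + ε * μ s :=
        (enorm_add_le _ _).trans
          (by gcongr; exact (enorm_integral_le_lintegral_enorm _).trans hosc)
  calc
    ∫⁻ t in s, ‖h t‖ₑ ∂μ ≤ ∫⁻ _ in s, (‖c‖ₑ + ε) ∂μ :=
      setLIntegral_mono' hs fun t ht => by
        calc ‖h t‖ₑ = ‖c + (h t - c)‖ₑ := by rw [add_sub_cancel]
          _ ≤ ‖c‖ₑ + ε := (enorm_add_le _ _).trans (by gcongr; exact hc t ht)
    _ = ‖c‖ₑ * μ s + ε * μ s := by rw [setLIntegral_const, add_mul]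
    _ ≤ ‖∫ t in s, h t ∂μ‖ₑ + ε * μ s + ε * μ s := by gcongr
    _ = _ := by rw [setLIntegral_const, add_assoc, ← add_mul, two_mul]

section Vitali

variable {ι : Type*} [Fintype ι] [DecidableEq ι]

/-- `h` is a density for the quasi-volume of `f`: the quasi-volume of every rectangle contained in
the unit cube is the integral of `h` over that rectangle. -/
def IsQVolDensity (f h : (ι → ℝ) → ℝ) : Prop :=
  ∀ ⦃u v : ι → ℝ⦄, 0 ≤ u → u ≤ v → v ≤ 1 → qvol f u v = ∫ t in Set.Icc u v, h t

variable {f h : (ι → ℝ) → ℝ}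

lemma IsQVolDensity.qvol_cell (hfh : IsQVolDensity f h) {N : ι → ℕ}
    {u : ∀ k, Fin (N k + 1) → ℝ} (hu : ∀ k, Monotone (u k)) (hu₀ : ∀ k, u k 0 = 0)
    (hu₁ : ∀ k, u k (Fin.last (N k)) = 1) (l : ∀ k, Fin (N k)) :
    qvol f (cellLower u l) (cellUpper u l) =
      ∫ t in Set.Icc (cellLower u l) (cellUpper u l), h t :=
  hfh ((funext hu₀).ge.trans (le_cellLower hu l)) (cellLower_le_cellUpper hu l)
    ((cellUpper_le hu l).trans (funext hu₁).le)

lemma IsQVolDensity.vitali_le (hfh : IsQVolDensity f h) :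
    vitali f ≤ ∫⁻ t in Set.Icc 0 1, ‖h t‖ₑ := by
  simp only [vitali, iSup_le_iff]
  intro N u hu hu₀ hu₁
  have hmono (k) := (hu k).monotone
  have hunit : (Set.Icc (fun k => u k 0) fun k => u k (Fin.last (N k))) = Set.Icc 0 1 := by
    simp only [hu₀, hu₁]; rfl
  rw [← hunit, ← sum_setLIntegral_cells hmono]
  refine Finset.sum_le_sum fun l _ => ?_
  rw [← Real.enorm_eq_ofReal_abs]
  exact (congrArg _ (hfh.qvol_cell hmono hu₀ hu₁ l)).trans_le (enorm_integral_le_lintegral_enorm _)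

lemma sum_enorm_qvol_le_vitali (f : (ι → ℝ) → ℝ) {N : ι → ℕ} {u : ∀ k, Fin (N k + 1) → ℝ}
    (hu : ∀ k, StrictMono (u k)) (hu₀ : ∀ k, u k 0 = 0) (hu₁ : ∀ k, u k (Fin.last (N k)) = 1) :
    ∑ l : ∀ k, Fin (N k), ‖qvol f (cellLower u l) (cellUpper u l)‖ₑ ≤ vitali f := by
  simp only [Real.enorm_eq_ofReal_abs]
  exact le_iSup₂_of_le N u (le_iSup₂_of_le hu hu₀ (le_iSup_of_le hu₁ le_rfl))

lemma IsQVolDensity.setLIntegral_cell_le (hfh : IsQVolDensity f h)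
    (hh : ContinuousOn h (Set.Icc 0 1)) {δ ε : ℝ} (hδ : 0 ≤ δ)
    (hosc : ∀ s ∈ Set.Icc (0 : ι → ℝ) 1, ∀ t ∈ Set.Icc (0 : ι → ℝ) 1,
      dist s t ≤ δ → dist (h s) (h t) ≤ ε)
    {N : ι → ℕ} {u : ∀ k, Fin (N k + 1) → ℝ} (hu : ∀ k, Monotone (u k)) (hu₀ : ∀ k, u k 0 = 0)
    (hu₁ : ∀ k, u k (Fin.last (N k)) = 1)
    (hmesh : ∀ k (j : Fin (N k)), dist (u k j.castSucc) (u k j.succ) ≤ δ) (l : ∀ k, Fin (N k)) :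
    ∫⁻ t in Set.Icc (cellLower u l) (cellUpper u l), ‖h t‖ₑ ≤
      ‖qvol f (cellLower u l) (cellUpper u l)‖ₑ +
        ∫⁻ _ in Set.Icc (cellLower u l) (cellUpper u l), 2 * ENNReal.ofReal ε := by
  have hsub : Set.Icc (cellLower u l) (cellUpper u l) ⊆ Set.Icc 0 1 :=
    Set.Icc_subset_Icc ((funext hu₀).ge.trans (le_cellLower hu l))
      ((cellUpper_le hu l).trans (funext hu₁).le)
  have hdiam : dist (cellLower u l) (cellUpper u l) ≤ δ :=
    (dist_pi_le_iff hδ).2 fun k => hmesh k (l k)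
  have hlower : cellLower u l ∈ Set.Icc (cellLower u l) (cellUpper u l) :=
    Set.left_mem_Icc.2 (cellLower_le_cellUpper hu l)
  rw [hfh.qvol_cell hu hu₀ hu₁]
  refine setLIntegral_enorm_le_of_enorm_sub_le (c := h (cellLower u l)) measurableSet_Icc
    isCompact_Icc.measure_ne_top ((hh.mono hsub).integrableOn_compact isCompact_Icc) fun t ht => ?_
  rw [← edist_eq_enorm_sub, edist_dist]
  exact ENNReal.ofReal_le_ofReal
    (hosc t (hsub ht) _ (hsub hlower) ((Real.dist_le_of_mem_pi_Icc ht hlower).trans hdiam))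

lemma IsQVolDensity.le_vitali (hfh : IsQVolDensity f h) (hh : ContinuousOn h (Set.Icc 0 1)) :
    ∫⁻ t in Set.Icc 0 1, ‖h t‖ₑ ≤ vitali f := by
  refine ENNReal.le_of_forall_pos_le_add fun ε hε _ => ?_
  obtain ⟨δ, hδ, hosc⟩ := Metric.uniformContinuousOn_iff_le.1
    (isCompact_Icc.uniformContinuousOn_of_continuous hh) (ε / 2) (by positivity)
  obtain ⟨n, v, hv, hv₀, hv₁, hmesh⟩ := exists_strictMono_fin_dist_le hδ
  let u (_ : ι) : Fin (n + 1) → ℝ := v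
  have hsum (φ : (ι → ℝ) → ℝ≥0∞) :
      ∑ l : ι → Fin n, ∫⁻ t in Set.Icc (cellLower u l) (cellUpper u l), φ t =
        ∫⁻ t in Set.Icc 0 1, φ t := by
    rw [sum_setLIntegral_cells fun _ => hv.monotone, hv₀, hv₁]; rfl
  calc
    ∫⁻ t in Set.Icc 0 1, ‖h t‖ₑ
      = ∑ l : ι → Fin n, ∫⁻ t in Set.Icc (cellLower u l) (cellUpper u l), ‖h t‖ₑ := (hsum _).symm
    _ ≤ ∑ l : ι → Fin n, (‖qvol f (cellLower u l) (cellUpper u l)‖ₑ +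
          ∫⁻ _ in Set.Icc (cellLower u l) (cellUpper u l), 2 * ENNReal.ofReal (ε / 2)) :=
      Finset.sum_le_sum fun l _ => hfh.setLIntegral_cell_le hh hδ.le hosc (fun _ => hv.monotone)
        (fun _ => hv₀) (fun _ => hv₁) (fun _ => hmesh) l
    _ = ∑ l : ι → Fin n, ‖qvol f (cellLower u l) (cellUpper u l)‖ₑ + ε := by
      rw [Finset.sum_add_distrib, hsum]
      have htwo : 2 * ENNReal.ofReal (ε / 2) = ε := by
        rw [← ENNReal.ofReal_ofNat 2, ← ENNReal.ofReal_mul zero_le_two,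
          mul_div_cancel₀ _ two_ne_zero, ENNReal.ofReal_coe_nnreal]
      simp [htwo, Real.volume_Icc_pi]
    _ ≤ vitali f + ε := by
      gcongr
      exact sum_enorm_qvol_le_vitali f (fun _ => hv) (fun _ => hv₀) (fun _ => hv₁)

theorem IsQVolDensity.vitali_eq (hfh : IsQVolDensity f h) (hh : ContinuousOn h (Set.Icc 0 1)) :
    vitali f = ENNReal.ofReal (∫ t in Set.Icc 0 1, |h t|) := by
  simp only [← Real.norm_eq_abs]
  rw [ofReal_integral_norm_eq_lintegral_enorm (hh.integrableOn_compact isCompact_Icc)]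
  exact hfh.vitali_le.antisymm (hfh.le_vitali hh)

end Vitali

theorem vitali_comp_sum_smul {E : Type*} [NormedAddCommGroup E] [NormedSpace ℝ E] {ι : Type*}
    [Fintype ι] [DecidableEq ι] {n : ℕ} (e : Fin n ≃ ι) {g : E → ℝ} (hg : ContDiff ℝ n g)
    (w : ι → E) (x : E) :
    vitali (fun t => g (x + ∑ i, t i • w i)) = ENNReal.ofReal
      (∫ t in Set.Icc (0 : ι → ℝ) 1, |iteratedFDeriv ℝ n g (x + ∑ i, t i • w i) (w ∘ e)|) := by
  have hdensity : IsQVolDensity (fun t => g (x + ∑ i, t i • w i))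
      fun t => iteratedFDeriv ℝ n g (x + ∑ i, t i • w i) (w ∘ e) :=
    fun _ _ _ huv _ => qvol_comp_sum_smul e hg w x huv
  exact hdensity.vitali_eq (Continuous.continuousOn (by fun_prop))

section Face

/-- The inclusion `t ↦ t̃` of `ℝ^T` as a coordinate subspace, all coordinates outside `T`
being `0`. -/
def faceInclusion {ι : Type*} [DecidableEq ι] (T : Finset ι) (t : {j // j ∈ T} → ℝ) : ι → ℝ :=
  fun k => if h : k ∈ T then t ⟨k, h⟩ else 0

lemma faceInclusion_eq_sum {ι : Type*} [DecidableEq ι] (T : Finset ι) (t : {j // j ∈ T} → ℝ) :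
    faceInclusion T t = ∑ j : {j // j ∈ T}, t j • Pi.single (j : ι) (1 : ℝ) := by
  ext k
  by_cases hk : k ∈ T
  · rw [Finset.sum_apply, Fintype.sum_eq_single ⟨k, hk⟩] <;>
      simp +contextual [faceInclusion, hk, Subtype.ext_iff, eq_comm]
  · rw [Finset.sum_apply, Fintype.sum_eq_zero]
    · simp [faceInclusion, hk]
    · intro j
      simp [(ne_of_mem_of_not_mem j.2 hk).symm]

variable {m : ℕ} {g : (Fin m → ℝ) → ℝ} (T : Finset (Fin m))

-- Enumerating `T` increasingly matches the order of differentiation in `pderivMulti`, so that the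
-- symmetry of higher derivatives is never needed.
lemma finRange_filter_mem_eq_ofFn :
    (List.finRange m).filter (· ∈ T) = List.ofFn (T.orderEmbOfFin rfl) :=
  ((List.sortedLT_finRange m).pairwise.filter _).sortedLT.eq_of_mem_iff
    (T.orderEmbOfFin rfl).strictMono.sortedLT_ofFn (by
      intro a; simp [List.mem_ofFn, ← Set.mem_range])

lemma pderivMulti_indicator_eq_iteratedFDeriv (hg : ContDiff ℝ #T g) :
    pderivMulti (fun k => if k ∈ T then 1 else 0) g =
      fun x => iteratedFDeriv ℝ #T g x fun j => Pi.single (T.orderEmbOfFin rfl j) 1 := by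
  have hiterate (k : Fin m) (h : (Fin m → ℝ) → ℝ) :
      (pderiv1 k)^[if k ∈ T then 1 else 0] h = if k ∈ T then pderiv1 k h else h := by
    split_ifs <;> rfl
  have hofFn : (List.ofFn fun j => (Pi.single (T.orderEmbOfFin rfl j) 1 : Fin m → ℝ)) =
      ((List.finRange m).filter (· ∈ T)).map fun k => Pi.single k 1 := by
    rw [finRange_filter_mem_eq_ofFn, List.map_ofFn]; rfl
  rw [← foldr_fderiv_eq_iteratedFDeriv hg, hofFn, List.foldr_map, List.foldr_filter]
  simp only [pderivMulti, hiterate, decide_eq_true_eq]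
  rfl

theorem vitali_face (hg : ContDiff ℝ #T g) :
    vitali (fun t => g (faceInclusion T t)) = ENNReal.ofReal (∫ t in Set.Icc 0 1,
      |pderivMulti (fun k => if k ∈ T then 1 else 0) g (faceInclusion T t)|) := by
  have hvitali := vitali_comp_sum_smul (T.orderIsoOfFin rfl).toEquiv hg
    (fun j : {j // j ∈ T} => Pi.single j.1 1) 0
  simp only [zero_add, ← faceInclusion_eq_sum] at hvitali
  rw [hvitali, pderivMulti_indicator_eq_iteratedFDeriv T hg]
  rfl

end Face

theorem statement14_general (m : ℕ) (g : (Fin m → ℝ) → ℝ) (hg : ContDiff ℝ m g) :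
    hk0 g ≠ ⊤ ∧
      hk0 g = ∑ T : Finset (Fin m),
        if T.Nonempty then
          ENNReal.ofReal
            (∫ t in Set.univ.pi fun _ : {j // j ∈ T} => Set.Icc (0 : ℝ) 1,
              |pderivMulti (fun k => if k ∈ T then 1 else 0) g
                fun k => if h : k ∈ T then t ⟨k, h⟩ else 0|)
        else 0 := by
  have hface : hk0 g = ∑ T : Finset (Fin m), if T.Nonempty then ENNReal.ofReal
      (∫ t in Set.univ.pi fun _ : {j // j ∈ T} => Set.Icc (0 : ℝ) 1,
        |pderivMulti (fun k => if k ∈ T then 1 else 0) g (faceInclusion T t)|) else 0 := by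
    refine Fintype.sum_congr _ _ fun T => ?_
    simp only [Set.pi_univ_Icc]
    exact if_congr Iff.rfl (vitali_face T (hg.of_le (mod_cast card_finset_fin_le T))) rfl
  refine ⟨?_, hface⟩
  rw [hface]
  refine ENNReal.sum_ne_top.2 fun T _ => ?_
  split_ifs
  exacts [ENNReal.ofReal_ne_top, ENNReal.zero_ne_top]

/-- For a `C^∞` function `g`, the restriction of `g` to `[0,1]^m` has
finite Hardy–Krause variation anchored at `0`, and
`V_HK0(g) = Σ_{∅≠T} ∫_{[0,1]^T} |g^{(1_T)}(t̃)| dt`. -/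
theorem statement14 (m : ℕ) (hm : 1 ≤ m) (g : (Fin m → ℝ) → ℝ)
    (hg : ContDiff ℝ (⊤ : ℕ∞) g) :
    hk0 g ≠ ⊤ ∧
      hk0 g = ∑ T : Finset (Fin m),
        if T.Nonempty then
          ENNReal.ofReal
            (∫ t in Set.univ.pi fun _ : {j // j ∈ T} => Set.Icc (0 : ℝ) 1,
              |pderivMulti (fun k => if k ∈ T then 1 else 0) g
                fun k => if h : k ∈ T then t ⟨k, h⟩ else 0|)
        else 0 := by
  exact statement14_general m g (hg.of_le (mod_cast le_top))
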